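/- For every database instance D : T → A → U and every finite set M of matching dependencies, there exists a resolved instance of D with respect to M. -/

import Mathlib

/-- A matching dependency: a finite set `L` of attribute pairs (the similarity
condition to the left of the arrow) and a finite set `R` of attribute pairs
(the pairs of attributes to be matched, to the right of the arrow). -/
structure MD (A : Type*) where
  L : Finset (A × A)
  R : Finset (A × A)

/-- `simPairs sim L D t₁ t₂` : the tuples `t₁, t₂` of instance `D` satisfy the
similarity condition given by the attribute pairs in `L`. -/
def simPairs {T A U : Type*} (sim : A → A → U → U → Prop)
    (L : Finset (A × A)) (D : T → A → U) (t₁ t₂ : T) : Prop :=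
  ∀ p ∈ L, sim p.1 p.2 (D t₁ p.1) (D t₂ p.2)

/-- `Modifiable sim M D t c` : the value of attribute `c` of tuple `t` is
modifiable in instance `D` with respect to the set `M` of MDs (least such predicate). -/
inductive Modifiable {T A U : Type*} (sim : A → A → U → U → Prop)
    (M : Finset (MD A)) (D : T → A → U) : T → A → Prop where
  | left_ne {m : MD A} {t s : T} {c e : A} :
      m ∈ M → (c, e) ∈ m.R → simPairs sim m.L D t s →
      D t c ≠ D s e → Modifiable sim M D t c
  | left_mod {m : MD A} {t s : T} {c e : A} :
      m ∈ M → (c, e) ∈ m.R → simPairs sim m.L D t s →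
      Modifiable sim M D s e → Modifiable sim M D t c
  | right_ne {m : MD A} {t s : T} {c e : A} :
      m ∈ M → (e, c) ∈ m.R → simPairs sim m.L D s t →
      D s e ≠ D t c → Modifiable sim M D t c
  | right_mod {m : MD A} {t s : T} {c e : A} :
      m ∈ M → (e, c) ∈ m.R → simPairs sim m.L D s t →
      Modifiable sim M D s e → Modifiable sim M D t c

/-- `(D, D') ⊨ M`. -/
def Sat {T A U : Type*} (sim : A → A → U → U → Prop)
    (M : Finset (MD A)) (D D' : T → A → U) : Prop :=
  (∀ m ∈ M, ∀ t₁ t₂ : T, simPairs sim m.L D t₁ t₂ →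
      ∀ p ∈ m.R, D' t₁ p.1 = D' t₂ p.2) ∧
  (∀ (t : T) (g : A), ¬ Modifiable sim M D t g → D' t g = D t g)

/-- `D'` is a resolved instance of `D` wrt `M`: there is a finite (possibly empty)
chain of instances `D₁, …, Dₙ` with `(D,D₁) ⊨ M`, `(Dᵢ,Dᵢ₊₁) ⊨ M`, `(Dₙ,D') ⊨ M`,
and `(D',D') ⊨ M`. -/
def ResolvedInstance {T A U : Type*} (sim : A → A → U → U → Prop)
    (M : Finset (MD A)) (D D' : T → A → U) : Prop :=
  ∃ L : List (T → A → U), List.Chain (Sat sim M) D (L ++ [D']) ∧ Sat sim M D' D'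

/-- Number of changed values in going from `D` to `D'`. -/
noncomputable def numChanges {T A U : Type*} (D D' : T → A → U) : ℕ :=
  Nat.card {p : T × A // D p.1 p.2 ≠ D' p.1 p.2}

/-- `D'` is a minimally resolved instance (MRI) of `D` wrt `M`. -/
def IsMRI {T A U : Type*} (sim : A → A → U → U → Prop)
    (M : Finset (MD A)) (D D' : T → A → U) : Prop :=
  ResolvedInstance sim M D D' ∧
  ∀ D'' : T → A → U, ResolvedInstance sim M D D'' →
    numChanges D D' ≤ numChanges D D''

/-- The edge relation of the similarity graph `G_D` on the vertex set `T × A`. -/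
def SimEdge {T A U : Type*} (sim : A → A → U → U → Prop)
    (M : Finset (MD A)) (D : T → A → U) (p q : T × A) : Prop :=
  ∃ m ∈ M, (simPairs sim m.L D p.1 q.1 ∧ (p.2, q.2) ∈ m.R) ∨
           (simPairs sim m.L D q.1 p.1 ∧ (q.2, p.2) ∈ m.R)

/-!
Repeatedly overwrite every modifiable value of the instance by one fixed value `v`. Modifiability is
constant along the edges of the similarity graph, and an edge whose endpoints carry different values
makes both of them modifiable; hence each overwriting step is a legal update. Conversely,
modifiability always originates at such an edge, so as long as anything is modifiable, some
modifiable value differs from `v`. Among the finitely many tuple-attribute pairs that can be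
modified at all, every step therefore strictly shrinks the set of those with value other than `v`.
When the process stops nothing is modifiable, and the instance is a legal update of itself.
-/

section

variable {T A U : Type*} {sim : A → A → U → U → Prop} {M : Finset (MD A)} {D D' : T → A → U}
  {t : T} {c : A} {p q : T × A} {v : U}

theorem SimEdge.symm (h : SimEdge sim M D p q) : SimEdge sim M D q p :=
  let ⟨m, hm, hpq⟩ := h
  ⟨m, hm, hpq.symm⟩

theorem SimEdge.modifiable_of_ne (h : SimEdge sim M D p q) (hne : D p.1 p.2 ≠ D q.1 q.2) :
    Modifiable sim M D p.1 p.2 := by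
  obtain ⟨m, hm, ⟨hsim, hR⟩ | ⟨hsim, hR⟩⟩ := h
  · exact .left_ne hm hR hsim hne
  · exact .right_ne hm hR hsim hne.symm

theorem SimEdge.modifiable_iff (h : SimEdge sim M D p q) :
    Modifiable sim M D p.1 p.2 ↔ Modifiable sim M D q.1 q.2 := by
  obtain ⟨m, hm, ⟨hsim, hR⟩ | ⟨hsim, hR⟩⟩ := h
  · exact ⟨.right_mod hm hR hsim, .left_mod hm hR hsim⟩
  · exact ⟨.left_mod hm hR hsim, .right_mod hm hR hsim⟩

theorem Modifiable.exists_simEdge_ne (h : Modifiable sim M D t c) :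
    ∃ p q, SimEdge sim M D p q ∧ D p.1 p.2 ≠ D q.1 q.2 := by
  induction h with
  | @left_ne m t s c e hm hR hsim hne => exact ⟨(t, c), (s, e), ⟨m, hm, .inl ⟨hsim, hR⟩⟩, hne⟩
  | @right_ne m t s c e hm hR hsim hne => exact ⟨(s, e), (t, c), ⟨m, hm, .inl ⟨hsim, hR⟩⟩, hne⟩
  | left_mod _ _ _ _ ih | right_mod _ _ _ _ ih => exact ih

theorem Modifiable.exists_modifiable_ne (h : Modifiable sim M D t c) (v : U) :
    ∃ s e, Modifiable sim M D s e ∧ D s e ≠ v := by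
  obtain ⟨p, q, hpq, hne⟩ := h.exists_simEdge_ne
  obtain hp | hq := hne.ne_or_ne v
  · exact ⟨p.1, p.2, hpq.modifiable_of_ne hne, hp⟩
  · exact ⟨q.1, q.2, hpq.symm.modifiable_of_ne hne.symm, hq⟩

theorem sat_iff_simEdge :
    Sat sim M D D' ↔ (∀ p q, SimEdge sim M D p q → D' p.1 p.2 = D' q.1 q.2) ∧
      ∀ t c, ¬ Modifiable sim M D t c → D' t c = D t c := by
  refine and_congr_left' ⟨fun h p q ↦ ?_, fun h m hm t s hsim r hr ↦ ?_⟩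
  · rintro ⟨m, hm, ⟨hsim, hR⟩ | ⟨hsim, hR⟩⟩
    · exact h m hm _ _ hsim _ hR
    · exact (h m hm _ _ hsim _ hR).symm
  · exact h (t, r.1) (s, r.2) ⟨m, hm, .inl ⟨hsim, hr⟩⟩

theorem sat_self_of_forall_not_modifiable (h : ∀ t c, ¬ Modifiable sim M D t c) :
    Sat sim M D D :=
  sat_iff_simEdge.2
    ⟨fun p _ hpq ↦ by_contra fun hne ↦ h p.1 p.2 (hpq.modifiable_of_ne hne), fun _ _ _ ↦ rfl⟩

theorem resolvedInstance_of_reflTransGen (h : Relation.ReflTransGen (Sat sim M) D D')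
    (hself : Sat sim M D' D') : ResolvedInstance sim M D D' := by
  obtain ⟨L, hchain, hlast⟩ := List.exists_isChain_cons_of_relationReflTransGen h
  have hstep : ∀ x ∈ (D :: L).getLast?, ∀ y ∈ [D'].head?, Sat sim M x y := by
    simpa only [List.getLast?_eq_some_getLast (List.cons_ne_nil D L), hlast, List.head?_cons,
      Option.mem_some_iff, forall_eq'] using hself
  exact ⟨L, hchain.append (.singleton D') hstep, hself⟩

open Classical in
/-- The chase step of the existence proof: every modifiable value is overwritten by `v`. -/
noncomputable def collapse (sim : A → A → U → U → Prop) (M : Finset (MD A)) (v : U)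
    (D : T → A → U) : T → A → U :=
  fun t c ↦ if Modifiable sim M D t c then v else D t c

theorem collapse_of_modifiable (h : Modifiable sim M D t c) : collapse sim M v D t c = v :=
  if_pos h

theorem collapse_of_not_modifiable (h : ¬ Modifiable sim M D t c) :
    collapse sim M v D t c = D t c :=
  if_neg h

theorem sat_collapse (sim : A → A → U → U → Prop) (M : Finset (MD A)) (v : U) (D : T → A → U) :
    Sat sim M D (collapse sim M v D) := by
  refine sat_iff_simEdge.2 ⟨fun p q hpq ↦ ?_, fun _ _ ↦ collapse_of_not_modifiable⟩
  by_cases hp : Modifiable sim M D p.1 p.2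
  · rw [collapse_of_modifiable hp, collapse_of_modifiable (hpq.modifiable_iff.1 hp)]
  · have heq : D p.1 p.2 = D q.1 q.2 := by_contra fun hne ↦ hp (hpq.modifiable_of_ne hne)
    rw [collapse_of_not_modifiable hp, collapse_of_not_modifiable (mt hpq.modifiable_iff.2 hp), heq]

/-- The attributes that occur to the right of the arrow in some matching dependency of `M`; only
their values can ever be modified. -/
def matchedAttrs (M : Finset (MD A)) : Set A :=
  ⋃ m ∈ M, Prod.fst '' (m.R : Set (A × A)) ∪ Prod.snd '' (m.R : Set (A × A))

theorem finite_matchedAttrs (M : Finset (MD A)) : (matchedAttrs M).Finite :=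
  M.finite_toSet.biUnion fun m _ ↦
    (m.R.finite_toSet.image Prod.fst).union (m.R.finite_toSet.image Prod.snd)

theorem Modifiable.mem_matchedAttrs (h : Modifiable sim M D t c) : c ∈ matchedAttrs M := by
  cases h with
  | left_ne hm hR | left_mod hm hR =>
    exact Set.mem_biUnion hm (.inl (Set.mem_image_of_mem Prod.fst hR))
  | right_ne hm hR | right_mod hm hR =>
    exact Set.mem_biUnion hm (.inr (Set.mem_image_of_mem Prod.snd hR))

/-- The tuple-attribute pairs with attribute in `matchedAttrs M` whose value differs from `v`: the
termination measure of iterated `collapse`. Restricting to `matchedAttrs M` keeps this set finite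
even when there are infinitely many attributes. -/
def uncollapsed (M : Finset (MD A)) (v : U) (D : T → A → U) : Set (T × A) :=
  {p | p.2 ∈ matchedAttrs M ∧ D p.1 p.2 ≠ v}

theorem finite_uncollapsed [Finite T] (M : Finset (MD A)) (v : U) (D : T → A → U) :
    (uncollapsed M v D).Finite :=
  (Set.finite_univ.prod (finite_matchedAttrs M)).subset fun _ hp ↦ ⟨trivial, hp.1⟩

theorem uncollapsed_collapse_ssubset (h : Modifiable sim M D t c) :
    uncollapsed M v (collapse sim M v D) ⊂ uncollapsed M v D := by
  obtain ⟨s, e, hmod, hne⟩ := h.exists_modifiable_ne v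
  refine Set.ssubset_iff_exists.2 ⟨fun p ⟨hattr, hp⟩ ↦ ⟨hattr, ?_⟩,
    (s, e), ⟨hmod.mem_matchedAttrs, hne⟩, fun hse ↦ hse.2 (collapse_of_modifiable hmod)⟩
  have hunmod : ¬ Modifiable sim M D p.1 p.2 := fun hpmod ↦ hp (collapse_of_modifiable hpmod)
  rwa [collapse_of_not_modifiable hunmod] at hp

theorem exists_reflTransGen_sat_not_modifiable [Finite T] (sim : A → A → U → U → Prop)
    (M : Finset (MD A)) (D : T → A → U) :
    ∃ D', Relation.ReflTransGen (Sat sim M) D D' ∧ ∀ t c, ¬ Modifiable sim M D' t c := by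
  obtain _ | ⟨⟨v⟩⟩ := isEmpty_or_nonempty U
  · exact ⟨D, .refl, fun t c _ ↦ isEmptyElim (D t c)⟩
  induction hn : (uncollapsed M v D).ncard using Nat.strong_induction_on generalizing D with
  | _ n ih =>
    by_cases hstable : ∀ t c, ¬ Modifiable sim M D t c
    · exact ⟨D, .refl, hstable⟩
    · push Not at hstable
      obtain ⟨t, c, hmod⟩ := hstable
      have hlt : (uncollapsed M v (collapse sim M v D)).ncard < n :=
        hn ▸ Set.ncard_lt_ncard (uncollapsed_collapse_ssubset hmod) (finite_uncollapsed M v D)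
      obtain ⟨D', hreach, hD'⟩ := ih _ hlt _ rfl
      exact ⟨D', .head (sat_collapse sim M v D) hreach, hD'⟩

end

theorem exists_resolved_instance_general {T A U : Type*} [Finite T]
    (sim : A → A → U → U → Prop) (M : Finset (MD A)) (D : T → A → U) :
    ∃ D' : T → A → U, ResolvedInstance sim M D D' := by
  obtain ⟨D', hreach, hstable⟩ := exists_reflTransGen_sat_not_modifiable sim M D
  exact ⟨D', resolvedInstance_of_reflTransGen hreach (sat_self_of_forall_not_modifiable hstable)⟩

/-- Theorem 3.2: for every instance `D` and finite set `M` of MDs there exists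
a resolved instance of `D` with respect to `M`. -/
theorem exists_resolved_instance {T A U : Type*} [Fintype T] [Fintype A]
    (sim : A → A → U → U → Prop)
    (hsym : ∀ (a b : A) (x y : U), sim a b x y → sim b a y x)
    (hsub : ∀ (a b : A) (x y : U), x = y → sim a b x y)
    (M : Finset (MD A)) (D : T → A → U) :
    ∃ D' : T → A → U, ResolvedInstance sim M D D' :=
  exists_resolved_instance_general sim M D
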